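/- Let K ⊂ R^n (n ≥ 3) be a convex body with a fixed interior point O. Suppose that for every hyperplane Λ through O there exists a line L_Λ such that Λ ∩ bd K is contained in the shadow boundary of K in the direction L_Λ. Then K is an ellipsoid. -/

import Mathlib

open Set Metric Function Bornology
open scoped RealInnerProductSpace Pointwise

noncomputable section

/-- The cone generated by `K` with apex `x`: `{x + t • (w - x) : w ∈ K, t ≥ 0}`. -/
def cone {n : ℕ} (K : Set (EuclideanSpace ℝ (Fin n))) (x : EuclideanSpace ℝ (Fin n)) :
    Set (EuclideanSpace ℝ (Fin n)) :=
  {p | ∃ w ∈ K, ∃ t : ℝ, 0 ≤ t ∧ p = x + t • (w - x)}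

/-- The support cone `S(K,x)`: the boundary of the cone generated by `K` with apex `x`. -/
def supportCone {n : ℕ} (K : Set (EuclideanSpace ℝ (Fin n))) (x : EuclideanSpace ℝ (Fin n)) :
    Set (EuclideanSpace ℝ (Fin n)) :=
  frontier (cone K x)

/-- A convex body: compact, convex, with nonempty interior. -/
def IsConvexBody {n : ℕ} (K : Set (EuclideanSpace ℝ (Fin n))) : Prop :=
  IsCompact K ∧ Convex ℝ K ∧ (interior K).Nonempty

/-- An ellipsoid: a nondegenerate affine image of the closed unit ball. -/
def IsEllipsoid {n : ℕ} (K : Set (EuclideanSpace ℝ (Fin n))) : Prop :=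
  ∃ f : EuclideanSpace ℝ (Fin n) ≃ᵃ[ℝ] EuclideanSpace ℝ (Fin n), K = f '' closedBall 0 1

/-- `K` has the strong intersection property relative to `O` and `S` with associated body `G`. -/
def StrongIntersectionProperty {n : ℕ} (O : EuclideanSpace ℝ (Fin n))
    (K S G : Set (EuclideanSpace ℝ (Fin n))) : Prop :=
  ∀ x ∈ frontier S, ∃ y ∈ frontier S, x ≠ y ∧ Collinear ℝ {x, O, y} ∧
    ∃ u : EuclideanSpace ℝ (Fin n), u ≠ 0 ∧
      supportCone K x ∩ supportCone K y = {p | ⟪u, p - O⟫ = 0} ∩ G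

/-!
Translate `O` to the origin. If the section of the boundary of `K` by a hyperplane `Λ` lies in the
shadow boundary in the direction `v`, then the projection onto `Λ` along `v` maps `K` into itself:
a support functional at a boundary point of `Λ` does not see `v`, so the projection of a point of
`K` cannot lie beyond it.

Compose such projections onto hyperplanes through a fixed axis of codimension two, turning by
`δ = π / N` each time. After half a turn the first hyperplane returns to itself, the axis is fixed,
and a transverse coordinate is multiplied by `-F`; going backwards gives a multiplier `-B`. Iterates
of a self-map of `K` stay bounded, so `F ≤ 1` and `B ≤ 1`, while `F * B = ∏ (cos² δ - aᵢ² sin² δ)`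
with bounded `aᵢ` is `1 - O(1 / N)`. Hence `F` tends to `1`, and in the limit the hyperplane section
of `K` is mapped into itself by a reflection fixing the axis.

So every section of `K` by a hyperplane through the origin has reflections in all hyperplanes of its
span. They preserve the inner product obtained by integrating over the polar of the section, and
points of equal length for that inner product are exchanged by one of them, so the gauge is
proportional to its norm. In dimension at least three any two vectors lie in a common hyperplane,
hence the gauge of `K` satisfies the parallelogram law and comes from an inner product.
-/

open Topology MeasureTheory Module

section HyperplaneSymmetries

variable {E : Type*} [NormedAddCommGroup E] [NormedSpace ℝ E]

/-- For every hyperplane through the origin, some linear projection onto it maps `C` into itself.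
The projection along `v` onto the kernel of `φ` is written as `x ↦ x - φ x • v` with `φ v = 1`. -/
def AdmitsHyperplaneProjections (C : Set E) : Prop :=
  ∀ φ : StrongDual ℝ E, φ ≠ 0 → ∃ v, φ v = 1 ∧ ∀ x ∈ C, x - φ x • v ∈ C

/-- For every hyperplane through the origin, some linear reflection in it maps `C` into itself.
The reflection along `v` in the kernel of `φ` is written as `x ↦ x - φ x • v` with `φ v = 2`. -/
def AdmitsHyperplaneReflections (C : Set E) : Prop :=
  ∀ φ : StrongDual ℝ E, φ ≠ 0 → ∃ v, φ v = 2 ∧ ∀ x ∈ C, x - φ x • v ∈ C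

end HyperplaneSymmetries

/-! ### Pencils of hyperplanes -/

section Pencil

variable {V : Type*} [NormedAddCommGroup V] [NormedSpace ℝ V]

/-- The point at angle `t` on the ellipse with conjugate radii `x` and `y`. For two functionals it
parametrizes the pencil of hyperplanes containing the intersection of their kernels. -/
def pencil (x y : V) (t : ℝ) : V := Real.cos t • x + Real.sin t • y

lemma pencil_add (x y : V) (s t : ℝ) :
    pencil x y (s + t) =
      Real.cos t • pencil x y s + Real.sin t • pencil x y (s + Real.pi / 2) := by
  simp only [pencil, Real.cos_add, Real.sin_add, Real.cos_pi_div_two, Real.sin_pi_div_two]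
  module

lemma pencil_add_pi (x y : V) (t : ℝ) : pencil x y (t + Real.pi) = -pencil x y t := by
  simp only [pencil, Real.cos_add_pi, Real.sin_add_pi]
  module

lemma norm_pencil_le (x y : V) (t : ℝ) : ‖pencil x y t‖ ≤ ‖x‖ + ‖y‖ := by
  refine (norm_add_le _ _).trans (add_le_add ?_ ?_)
  · rw [norm_smul]
    exact mul_le_of_le_one_left (norm_nonneg x) (Real.abs_cos_le_one t)
  · rw [norm_smul]
    exact mul_le_of_le_one_left (norm_nonneg y) (Real.abs_sin_le_one t)

/-- `e₁, e₂` is dual to `α, β`: it spans a complement of `ker α ∩ ker β` in which the functionals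
`α, β` are the coordinates. -/
structure IsDualPair (α β : StrongDual ℝ V) (e₁ e₂ : V) : Prop where
  fst_fst : α e₁ = 1
  fst_snd : α e₂ = 0
  snd_fst : β e₁ = 0
  snd_snd : β e₂ = 1

variable {α β : StrongDual ℝ V} {e₁ e₂ : V}

lemma exists_isDualPair {e : V} (hα : α ≠ 0) (he : α e = 0) (hβ : β e ≠ 0) :
    ∃ e₁ e₂, IsDualPair α β e₁ e₂ := by
  obtain ⟨x, hx⟩ : ∃ x, α x ≠ 0 := DFunLike.ne_iff.1 hα
  refine ⟨(α x)⁻¹ • (x - (β x / β e) • e), (β e)⁻¹ • e, ?_, ?_, ?_, ?_⟩ <;> simp [he, hx, hβ]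

lemma IsDualPair.pencil_apply (h : IsDualPair α β e₁ e₂) (s t : ℝ) :
    pencil α β s (pencil e₁ e₂ t) = Real.cos (s - t) := by
  simp only [pencil, add_apply, smul_apply, map_add, map_smul, smul_eq_mul, h.fst_fst, h.fst_snd,
    h.snd_fst, h.snd_snd, Real.cos_sub]
  ring

lemma IsDualPair.pencil_ne_zero (h : IsDualPair α β e₁ e₂) (t : ℝ) : pencil α β t ≠ 0 := by
  intro h_zero
  simpa [h_zero] using h.pencil_apply t t

end Pencil

section Transport

variable {E : Type*} [NormedAddCommGroup E] [NormedSpace ℝ E]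

/-- `T` maps `C` into itself, fixes the axis `ker α ∩ ker β` of a pencil pointwise, and carries the
hyperplane at angle `s` into the one at angle `t`. The transverse coordinate on the hyperplane at
angle `s` is the functional at angle `s + π / 2`, and `T` multiplies it by `m`. -/
structure IsTransport (C : Set E) (α β : StrongDual ℝ E) (s t m : ℝ) (T : E →L[ℝ] E) : Prop where
  mapsTo : MapsTo T C C
  apply_eq_self : ∀ x, α x = 0 → β x = 0 → T x = x
  apply_eq_zero : ∀ x, pencil α β s x = 0 → pencil α β t (T x) = 0
  apply_eq_mul : ∀ x, pencil α β s x = 0 →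
    pencil α β (t + Real.pi / 2) (T x) = m * pencil α β (s + Real.pi / 2) x

/-- The transverse coordinate of the direction `v t` of a projection onto the hyperplane at angle
`t` of a pencil. -/
def drift (α β : StrongDual ℝ E) (v : ℝ → E) (t : ℝ) : ℝ := pencil α β (t + Real.pi / 2) (v t)

namespace IsTransport

variable {C : Set E} {α β : StrongDual ℝ E} {s t u m m' : ℝ} {S T : E →L[ℝ] E}

lemma one : IsTransport C α β s s 1 1 where
  mapsTo := mapsTo_id C
  apply_eq_self _ _ _ := rfl
  apply_eq_zero _ hx := hx
  apply_eq_mul x _ := (one_mul (pencil α β (s + Real.pi / 2) x)).symm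

lemma mul (hS : IsTransport C α β t u m' S) (hT : IsTransport C α β s t m T) :
    IsTransport C α β s u (m' * m) (S * T) where
  mapsTo := hS.mapsTo.comp hT.mapsTo
  apply_eq_self x hα hβ := by
    rw [mul_apply_eq_comp, hT.apply_eq_self x hα hβ, hS.apply_eq_self x hα hβ]
  apply_eq_zero x hx := hS.apply_eq_zero _ (hT.apply_eq_zero x hx)
  apply_eq_mul x hx := by
    rw [mul_apply_eq_comp, hS.apply_eq_mul _ (hT.apply_eq_zero x hx),
      hT.apply_eq_mul x hx, mul_assoc]

lemma pow (hT : IsTransport C α β s s m T) (k : ℕ) : IsTransport C α β s s (m ^ k) (T ^ k) := by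
  induction k with
  | zero => simpa only [pow_zero] using one
  | succ k ih => simpa only [pow_succ] using ih.mul hT

lemma source_add_pi (hT : IsTransport C α β (s + Real.pi) t m T) :
    IsTransport C α β s t (-m) T where
  mapsTo := hT.mapsTo
  apply_eq_self := hT.apply_eq_self
  apply_eq_zero x hx := hT.apply_eq_zero x (by rw [pencil_add_pi, neg_apply, hx, neg_zero])
  apply_eq_mul x hx := by
    rw [hT.apply_eq_mul x (by rw [pencil_add_pi, neg_apply, hx, neg_zero]),
      add_right_comm, pencil_add_pi, neg_apply]
    ring

lemma target_add_pi (hT : IsTransport C α β s (t + Real.pi) m T) :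
    IsTransport C α β s t (-m) T where
  mapsTo := hT.mapsTo
  apply_eq_self := hT.apply_eq_self
  apply_eq_zero x hx := by
    simpa only [pencil_add_pi, neg_apply, neg_eq_zero] using hT.apply_eq_zero x hx
  apply_eq_mul x hx := by
    have h := hT.apply_eq_mul x hx
    rw [add_right_comm, pencil_add_pi, neg_apply] at h
    linarith

lemma of_projection {v : E} {δ : ℝ} (hv : pencil α β (s + δ) v = 1)
    (hC : ∀ x ∈ C, x - pencil α β (s + δ) x • v ∈ C) :
    IsTransport C α β s (s + δ)
      (Real.cos δ - Real.sin δ * pencil α β (s + δ + Real.pi / 2) v)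
      (1 - (pencil α β (s + δ)).smulRight v) where
  mapsTo := hC
  apply_eq_self x hα hβ := by simp [pencil, hα, hβ]
  apply_eq_zero x _ := by simp [hv]
  apply_eq_mul x hx := by
    have h_source : pencil α β (s + δ) x = Real.sin δ * pencil α β (s + Real.pi / 2) x := by
      simp [pencil_add α β s δ, hx]
    have h_transverse : pencil α β (s + δ + Real.pi / 2) x =
        Real.cos δ * pencil α β (s + Real.pi / 2) x := by
      rw [add_right_comm, pencil_add α β _ δ, add_assoc, add_halves, pencil_add_pi]
      simp [hx]
    simp only [sub_apply, one_apply_eq_self, ContinuousLinearMap.smulRight_apply, map_sub, map_smul,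
      smul_eq_mul, h_source, h_transverse]
    ring

variable {v : ℝ → E}

lemma exists_prod_forward (hv : ∀ t, pencil α β t (v t) = 1)
    (hC : ∀ t, ∀ x ∈ C, x - pencil α β t x • v t ∈ C) (s δ : ℝ) (N : ℕ) :
    ∃ T, IsTransport C α β s (s + N * δ)
      (∏ i ∈ Finset.range N, (Real.cos δ - Real.sin δ * drift α β v (s + (i + 1) * δ))) T := by
  induction N with
  | zero => exact ⟨1, by simpa using one⟩
  | succ N ih =>
    obtain ⟨T, hT⟩ := ih
    have h_angle : s + N * δ + δ = s + (N + 1) * δ := by ring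
    have h_step := of_projection (s := s + N * δ) (δ := δ) (hv _) (hC _)
    rw [h_angle] at h_step
    rw [Finset.prod_range_succ_comm, Nat.cast_succ]
    exact ⟨_, h_step.mul hT⟩

lemma exists_prod_backward (hv : ∀ t, pencil α β t (v t) = 1)
    (hC : ∀ t, ∀ x ∈ C, x - pencil α β t x • v t ∈ C) (s δ : ℝ) (N : ℕ) :
    ∃ T, IsTransport C α β (s + (N + 1) * δ) (s + δ)
      (∏ i ∈ Finset.range N, (Real.cos δ + Real.sin δ * drift α β v (s + (i + 1) * δ))) T := by
  induction N with
  | zero => exact ⟨1, by simpa using one⟩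
  | succ N ih =>
    obtain ⟨T, hT⟩ := ih
    have h_angle : s + (N + 1 + 1) * δ + -δ = s + (N + 1) * δ := by ring
    have h_step := of_projection (s := s + (N + 1 + 1) * δ) (δ := -δ) (hv _) (hC _)
    rw [h_angle, Real.cos_neg, Real.sin_neg, neg_mul, sub_neg_eq_add] at h_step
    rw [Finset.prod_range_succ, Nat.cast_succ]
    exact ⟨_, hT.mul h_step⟩

end IsTransport
end Transport

section Compactness

variable {E : Type*} [NormedAddCommGroup E] [NormedSpace ℝ E] {C : Set E}

lemma isClosed_setOf_mapsTo (hC : IsClosed C) : IsClosed {T : E →L[ℝ] E | MapsTo T C C} := by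
  simp only [MapsTo, ofPred_forall]
  exact isClosed_iInter fun x ↦ isClosed_iInter fun _ ↦ hC.preimage (by fun_prop)

lemma exists_opNorm_le_of_mapsTo (hC : IsBounded C) (hC₀ : C ∈ 𝓝 0) :
    ∃ M, ∀ T : E →L[ℝ] E, MapsTo T C C → ‖T‖ ≤ M := by
  obtain ⟨r, hr, hrC⟩ := nhds_basis_closedBall.mem_iff.1 hC₀
  obtain ⟨R, hR, hCR⟩ := hC.subset_closedBall_lt 0 0
  refine ⟨R / r, fun T hT ↦ T.opNorm_le_of_unit_norm (by positivity) fun x hx ↦ ?_⟩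
  have h_mem : T (r • x) ∈ closedBall 0 R :=
    hCR (hT (hrC (by simp [norm_smul, hx, abs_of_pos hr])))
  rw [mem_closedBall_zero_iff, map_smul, norm_smul, Real.norm_of_nonneg hr.le] at h_mem
  rwa [le_div_iff₀' hr]

lemma isCompact_setOf_mapsTo [FiniteDimensional ℝ E] (hC : IsCompact C) (hC₀ : C ∈ 𝓝 0) :
    IsCompact {T : E →L[ℝ] E | MapsTo T C C} := by
  obtain ⟨M, hM⟩ := exists_opNorm_le_of_mapsTo hC.isBounded hC₀
  have : ProperSpace (E →L[ℝ] E) := FiniteDimensional.proper ℝ _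
  exact isCompact_of_isClosed_isBounded (isClosed_setOf_mapsTo hC.isClosed)
    (isBounded_iff_forall_norm_le.2 ⟨M, hM⟩)

variable {α β : StrongDual ℝ E} {e₁ e₂ : E} {s t m : ℝ} {T : E →L[ℝ] E}

lemma IsTransport.multiplier_eq (h : IsDualPair α β e₁ e₂) (hT : IsTransport C α β s t m T) :
    m = pencil α β (t + Real.pi / 2) (T (pencil e₁ e₂ (s + Real.pi / 2))) := by
  rw [hT.apply_eq_mul _ (by simp [h.pencil_apply]), h.pencil_apply, sub_self, Real.cos_zero,
    mul_one]

lemma isClosed_setOf_isTransport (hC : IsClosed C) {μ : (E →L[ℝ] E) → ℝ} (hμ : Continuous μ) :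
    IsClosed {T | IsTransport C α β s t (μ T) T} := by
  have h_setOf : {T | IsTransport C α β s t (μ T) T} = {T : E →L[ℝ] E | MapsTo T C C ∧
      (∀ x, α x = 0 → β x = 0 → T x = x) ∧
      (∀ x, pencil α β s x = 0 → pencil α β t (T x) = 0) ∧
      ∀ x, pencil α β s x = 0 →
        pencil α β (t + Real.pi / 2) (T x) = μ T * pencil α β (s + Real.pi / 2) x} :=
    Set.ext fun T ↦ ⟨fun h ↦ ⟨h.1, h.2, h.3, h.4⟩, fun h ↦ ⟨h.1, h.2.1, h.2.2.1, h.2.2.2⟩⟩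
  rw [h_setOf]
  refine (isClosed_setOf_mapsTo hC).and (.and ?_ (.and ?_ ?_)) <;>
  · simp only [ofPred_forall]
    repeat refine isClosed_iInter fun _ ↦ ?_
    exact isClosed_eq (by fun_prop) (by fun_prop)

lemma isCompact_setOf_multiplier [FiniteDimensional ℝ E] (hC : IsCompact C) (hC₀ : C ∈ 𝓝 0)
    (h : IsDualPair α β e₁ e₂) (s t : ℝ) : IsCompact {m | ∃ T, IsTransport C α β s t m T} := by
  let multiplier (T : E →L[ℝ] E) : ℝ :=
    pencil α β (t + Real.pi / 2) (T (pencil e₁ e₂ (s + Real.pi / 2)))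
  have h_cont : Continuous multiplier := by fun_prop
  have h_eq : {m | ∃ T, IsTransport C α β s t m T} =
      multiplier '' {T | IsTransport C α β s t (multiplier T) T} := by
    ext m
    constructor
    · rintro ⟨T, hT⟩
      have hm : m = multiplier T := hT.multiplier_eq h
      exact ⟨T, by simpa only [mem_ofPred_eq, ← hm] using hT, hm.symm⟩
    · rintro ⟨T, hT, rfl⟩
      exact ⟨T, hT⟩
  rw [h_eq]
  exact ((isCompact_setOf_mapsTo hC hC₀).of_isClosed_subset
    (isClosed_setOf_isTransport hC.isClosed h_cont)
    (fun _ hT ↦ hT.mapsTo)).image h_cont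

lemma IsTransport.abs_multiplier_le_one [FiniteDimensional ℝ E] (hC : IsCompact C)
    (hC₀ : C ∈ 𝓝 0) (h : IsDualPair α β e₁ e₂) (hT : IsTransport C α β s s m T) : |m| ≤ 1 := by
  obtain ⟨A, hA⟩ := (isCompact_setOf_multiplier hC hC₀ h s s).isBounded.exists_norm_le
  by_contra! hm
  obtain ⟨k, hk⟩ := pow_unbounded_of_one_lt A hm
  have h_pow : ‖m ^ k‖ ≤ A := hA _ ⟨T ^ k, hT.pow k⟩
  rw [norm_pow, Real.norm_eq_abs] at h_pow
  exact h_pow.not_gt hk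

lemma exists_abs_drift_le (hC : IsBounded C) (hC₀ : C ∈ 𝓝 0)
    (h : IsDualPair α β e₁ e₂) {v : ℝ → E}
    (hvC : ∀ t, ∀ x ∈ C, x - pencil α β t x • v t ∈ C) : ∃ A, ∀ t, |drift α β v t| ≤ A := by
  obtain ⟨M, hM⟩ := exists_opNorm_le_of_mapsTo hC hC₀
  refine ⟨(‖α‖ + ‖β‖) * (M * (‖e₁‖ + ‖e₂‖)), fun t ↦ ?_⟩
  let P : E →L[ℝ] E := 1 - (pencil α β t).smulRight (v t)
  have hP : ‖P‖ ≤ M := hM P (hvC t)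
  have h_drift : drift α β v t = -pencil α β (t + Real.pi / 2) (P (pencil e₁ e₂ t)) := by
    simp [P, drift, h.pencil_apply]
  rw [h_drift, abs_neg, ← Real.norm_eq_abs]
  calc ‖pencil α β (t + Real.pi / 2) (P (pencil e₁ e₂ t))‖
      ≤ ‖pencil α β (t + Real.pi / 2)‖ * (‖P‖ * ‖pencil e₁ e₂ t‖) :=
        ContinuousLinearMap.le_opNorm_of_le _ (P.le_opNorm _)
    _ ≤ (‖α‖ + ‖β‖) * (M * (‖e₁‖ + ‖e₂‖)) := by
        gcongr
        · exact norm_pencil_le α β _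
        · exact (norm_nonneg P).trans hP
        · exact norm_pencil_le e₁ e₂ t

end Compactness

/-! ### Half a turn around a pencil -/

section HalfTurn

lemma one_sub_le_cos_sub_mul_cos_add {a A : ℝ} (ha : |a| ≤ A) (δ : ℝ) :
    1 - (1 + A ^ 2) * δ ^ 2 ≤
      (Real.cos δ - Real.sin δ * a) * (Real.cos δ + Real.sin δ * a) := by
  have h_sin : Real.sin δ ^ 2 ≤ δ ^ 2 := sq_le_sq.2 Real.abs_sin_le_abs
  have h_sq : a ^ 2 ≤ A ^ 2 := sq_le_sq.2 (ha.trans (le_abs_self A))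
  calc 1 - (1 + A ^ 2) * δ ^ 2 ≤ 1 - (1 + a ^ 2) * Real.sin δ ^ 2 := by gcongr
    _ = (Real.cos δ - Real.sin δ * a) * (Real.cos δ + Real.sin δ * a) := by
      linear_combination (1 : ℝ) * (Real.sin_sq_add_cos_sq δ).symm

lemma cos_sub_sin_mul_pos {a A δ : ℝ} (ha : |a| ≤ A) (hδ : (1 + A ^ 2) * δ ^ 2 < 1) :
    0 < Real.cos δ - Real.sin δ * a := by
  have h_cos : 0 < Real.cos δ := by
    have h_abs : |δ| < 1 := (sq_lt_one_iff_abs_lt_one δ).1 (by nlinarith [sq_nonneg (A * δ)])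
    obtain ⟨h_lower, h_upper⟩ := abs_lt.1 h_abs
    have := Real.pi_gt_three
    exact Real.cos_pos_of_mem_Ioo ⟨by linarith, by linarith⟩
  have h_sq : (Real.sin δ * a) ^ 2 < Real.cos δ ^ 2 := by
    linarith [one_sub_le_cos_sub_mul_cos_add ha δ]
  exact sub_pos.2 ((le_abs_self _).trans_lt (abs_lt_of_sq_lt_sq h_sq h_cos.le))

lemma one_sub_le_prod_mul_prod {a : ℕ → ℝ} {A δ : ℝ} (ha : ∀ i, |a i| ≤ A)
    (hδ : (1 + A ^ 2) * δ ^ 2 < 1) (N : ℕ) :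
    1 - N * ((1 + A ^ 2) * δ ^ 2) ≤
      (∏ i ∈ Finset.range N, (Real.cos δ - Real.sin δ * a i)) *
        ∏ i ∈ Finset.range N, (Real.cos δ + Real.sin δ * a i) := by
  calc 1 - N * ((1 + A ^ 2) * δ ^ 2) = 1 + N * -((1 + A ^ 2) * δ ^ 2) := by ring
    _ ≤ (1 + -((1 + A ^ 2) * δ ^ 2)) ^ N := one_add_mul_le_pow (by linarith) N
    _ = ∏ i ∈ Finset.range N, (1 - (1 + A ^ 2) * δ ^ 2) := by
      rw [Finset.prod_const, Finset.card_range, ← sub_eq_add_neg]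
    _ ≤ ∏ i ∈ Finset.range N,
          (Real.cos δ - Real.sin δ * a i) * (Real.cos δ + Real.sin δ * a i) :=
      Finset.prod_le_prod (fun _ _ ↦ by linarith)
        fun i _ ↦ one_sub_le_cos_sub_mul_cos_add (ha i) δ
    _ = _ := Finset.prod_mul_distrib

variable {E : Type*} [NormedAddCommGroup E] [NormedSpace ℝ E] [FiniteDimensional ℝ E] {C : Set E}
  {α β : StrongDual ℝ E} {e₁ e₂ : E}

lemma exists_isTransport_near_neg_one (hC : IsCompact C) (hC₀ : C ∈ 𝓝 0)
    (h : IsDualPair α β e₁ e₂) {v : ℝ → E} (hv : ∀ t, pencil α β t (v t) = 1)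
    (hvC : ∀ t, ∀ x ∈ C, x - pencil α β t x • v t ∈ C) {A δ : ℝ}
    (hA : ∀ t, |drift α β v t| ≤ A) (hδ : (1 + A ^ 2) * δ ^ 2 < 1) {N : ℕ}
    (hN : N * δ = Real.pi) :
    ∃ m ∈ Icc (-1) (-1 + N * ((1 + A ^ 2) * δ ^ 2)), ∃ T, IsTransport C α β 0 0 m T := by
  obtain ⟨S, hS⟩ := IsTransport.exists_prod_forward hv hvC 0 δ N
  obtain ⟨T, hT⟩ := IsTransport.exists_prod_backward hv hvC 0 δ N
  have h_prod := one_sub_le_prod_mul_prod (a := fun i ↦ drift α β v (0 + (i + 1) * δ))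
    (fun i ↦ hA _) hδ N
  have h_pos : 0 < ∏ i ∈ Finset.range N,
      (Real.cos δ - Real.sin δ * drift α β v (0 + (i + 1) * δ)) :=
    Finset.prod_pos fun i _ ↦ cos_sub_sin_mul_pos (hA _) hδ
  set F := ∏ i ∈ Finset.range N, (Real.cos δ - Real.sin δ * drift α β v (0 + (i + 1) * δ))
  set B := ∏ i ∈ Finset.range N, (Real.cos δ + Real.sin δ * drift α β v (0 + (i + 1) * δ))
  have h_loop : IsTransport C α β 0 0 (-F) S := by
    rw [hN] at hS
    exact hS.target_add_pi
  have h_loop' : IsTransport C α β (0 + δ) (0 + δ) (-B) T := by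
    have h_angle : 0 + (N + 1) * δ = 0 + δ + Real.pi := by linear_combination hN
    rw [h_angle] at hT
    exact hT.source_add_pi
  have hF := (abs_le.1 (h_loop.abs_multiplier_le_one hC hC₀ h)).1
  have hB := (abs_le.1 (h_loop'.abs_multiplier_le_one hC hC₀ h)).1
  have hFB : F * B ≤ F := mul_le_of_le_one_right h_pos.le (by linarith)
  exact ⟨-F, ⟨hF, by linarith⟩, S, h_loop⟩

lemma AdmitsHyperplaneProjections.exists_isTransport_neg_one (hC : IsCompact C) (hC₀ : C ∈ 𝓝 0)
    (h_proj : AdmitsHyperplaneProjections C) (h : IsDualPair α β e₁ e₂) :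
    ∃ T, IsTransport C α β 0 0 (-1) T := by
  choose v hv hvC using fun t ↦ h_proj (pencil α β t) (h.pencil_ne_zero t)
  obtain ⟨A, hA⟩ := exists_abs_drift_le hC.isBounded hC₀ h hvC
  refine (isCompact_setOf_multiplier hC hC₀ h 0 0).isClosed.closure_subset
    (Metric.mem_closure_iff.2 fun ε hε ↦ ?_)
  obtain ⟨N, hN⟩ := exists_nat_gt ((1 + A ^ 2) * Real.pi ^ 2 / min ε 1)
  have hN₀ : (0 : ℝ) < N := lt_of_le_of_lt (by positivity) hN
  have h_error : N * ((1 + A ^ 2) * (Real.pi / N) ^ 2) < min ε 1 := by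
    rw [div_lt_iff₀ (by positivity)] at hN
    field_simp
    linarith
  have h_one_le : (1 : ℝ) ≤ N := Nat.one_le_cast.2 (Nat.cast_pos.1 hN₀)
  have h_small : (1 + A ^ 2) * (Real.pi / N) ^ 2 < 1 :=
    (le_mul_of_one_le_left (by positivity) h_one_le).trans_lt (h_error.trans_le (min_le_right _ _))
  obtain ⟨m, ⟨hm_lower, hm_upper⟩, hm⟩ :=
    exists_isTransport_near_neg_one hC hC₀ h hv hvC hA h_small (mul_div_cancel₀ _ hN₀.ne')
  refine ⟨m, hm, ?_⟩
  rw [Real.dist_eq, abs_sub_comm, abs_of_nonneg (by linarith)]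
  linarith [min_le_left ε 1]

lemma AdmitsHyperplaneProjections.admitsHyperplaneReflections_ker (hC : IsCompact C)
    (hC₀ : C ∈ 𝓝 0) (h_proj : AdmitsHyperplaneProjections C) (hα : α ≠ 0) :
    AdmitsHyperplaneReflections ((↑) ⁻¹' C : Set α.ker) := by
  intro φ hφ
  obtain ⟨β, hβ, -⟩ := exists_extension_norm_eq α.ker φ
  obtain ⟨e, he⟩ : ∃ e, φ e ≠ 0 := DFunLike.ne_iff.1 hφ
  obtain ⟨e₁, e₂, h⟩ := exists_isDualPair hα e.2 ((hβ e).trans_ne he)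
  obtain ⟨T, hT⟩ := h_proj.exists_isTransport_neg_one hC hC₀ h
  have hα_T : α (T e₂) = 0 := by
    simpa [pencil] using hT.apply_eq_zero e₂ (by simp [pencil, h.fst_snd])
  have hβ_T : β (T e₂) = -1 := by
    simpa [pencil, h.snd_snd] using hT.apply_eq_mul e₂ (by simp [pencil, h.fst_snd])
  have h_refl (x : α.ker) : T x = x - β x • (e₂ - T e₂) := by
    have h_axis := hT.apply_eq_self (x - β x • e₂) (by simp [h.fst_snd])
      (by simp [h.snd_snd])
    rw [map_sub, map_smul, sub_eq_iff_eq_add] at h_axis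
    rw [h_axis]
    module
  refine ⟨⟨e₂ - T e₂, by simp [h.fst_snd, hα_T]⟩, ?_, fun x hx ↦ ?_⟩
  · rw [← hβ]
    simp only [map_sub, h.snd_snd, hβ_T]
    norm_num
  · simpa [h_refl, hβ] using hT.mapsTo hx

end HalfTurn

/-! ### The bilinear form of the polar -/

section PolarForm

lemma measurePreserving_of_involutive {V : Type*} [NormedAddCommGroup V] [NormedSpace ℝ V]
    [FiniteDimensional ℝ V] [MeasurableSpace V] [BorelSpace V] (μ : Measure V)
    [μ.IsAddHaarMeasure] {T : V →ₗ[ℝ] V} (hT : Involutive T) : MeasurePreserving T μ μ := by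
  have h_det_sq : LinearMap.det T * LinearMap.det T = 1 := by
    rw [← LinearMap.det_comp, LinearMap.ext hT (f := T ∘ₗ T) (g := LinearMap.id), LinearMap.det_id]
  have h_abs : |LinearMap.det T| = 1 := by
    rcases mul_self_eq_one_iff.1 h_det_sq with h | h <;> simp [h]
  refine ⟨T.continuous_of_finiteDimensional.measurable, ?_⟩
  rw [Measure.map_linearMap_addHaar_eq_smul_addHaar μ (left_ne_zero_of_mul_eq_one h_det_sq),
    abs_inv, h_abs, inv_one, ENNReal.ofReal_one, one_smul]

lemma gauge_preimage {V W : Type*} [AddCommGroup V] [Module ℝ V] [AddCommGroup W] [Module ℝ W]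
    (f : V →ₗ[ℝ] W) (s : Set W) (x : V) : gauge (f ⁻¹' s) x = gauge s (f x) := by
  simp only [gauge_def', mem_preimage, map_smul]

variable {E : Type*} [NormedAddCommGroup E] [NormedSpace ℝ E] {C : Set E}

lemma gauge_apply_of_involutive {T : E →L[ℝ] E} (hT : Involutive T) (hTC : MapsTo T C C) (x : E) :
    gauge C (T x) = gauge C x := by
  have h_preimage : T ⁻¹' C = C :=
    Subset.antisymm (fun y hy ↦ hT y ▸ hTC hy) hTC
  rw [← T.coe_coe, ← gauge_preimage, T.coe_coe, h_preimage]

lemma involutive_sub_smul {φ : StrongDual ℝ E} {v : E} (hv : φ v = 2) :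
    Involutive (1 - φ.smulRight v : E →L[ℝ] E) := by
  intro x
  simp only [sub_apply, one_apply_eq_self, ContinuousLinearMap.smulRight_apply, map_sub, map_smul,
    hv]
  module

lemma polar_mem_nhds_zero (hC : IsBounded C) : StrongDual.polar ℝ C ∈ 𝓝 0 := by
  obtain ⟨R, hR, hCR⟩ := hC.subset_closedBall_lt 0 0
  exact Filter.mem_of_superset (closedBall_mem_nhds 0 (inv_pos.2 hR))
    ((NormedSpace.closedBall_inv_subset_polar_closedBall ℝ).trans
      fun _ hφ z hz ↦ hφ z (hCR hz))

variable [FiniteDimensional ℝ E]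

lemma integrableOn_polar_apply_mul_apply (hC₀ : C ∈ 𝓝 0) (x y : E) :
    IntegrableOn (fun φ : StrongDual ℝ E ↦ φ x * φ y) (StrongDual.polar ℝ C) Measure.addHaar := by
  have h_compact : IsCompact (StrongDual.polar ℝ C) :=
    isCompact_of_isClosed_isBounded (NormedSpace.isClosed_polar ℝ C)
      (NormedSpace.isBounded_polar_of_mem_nhds_zero ℝ hC₀)
  exact ContinuousOn.integrableOn_compact h_compact (by fun_prop)

/-- The bilinear form `(x, y) ↦ ∫ φ x * φ y` over the polar of a neighborhood `C` of the origin,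
with respect to Haar measure on the dual: the inner product of the Legendre ellipsoid of the polar.
-/
def polarForm (hC₀ : C ∈ 𝓝 0) : LinearMap.BilinForm ℝ E :=
  LinearMap.mk₂ ℝ (fun x y ↦ ∫ φ in StrongDual.polar ℝ C, φ x * φ y ∂Measure.addHaar)
    (fun x x' y ↦ by
      simp only [map_add, add_mul]
      exact integral_add (integrableOn_polar_apply_mul_apply hC₀ x y)
        (integrableOn_polar_apply_mul_apply hC₀ x' y))
    (fun c x y ↦ by
      simp only [map_smul, smul_eq_mul, mul_assoc]
      exact integral_const_mul c _)
    (fun x y y' ↦ by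
      simp only [map_add, mul_add]
      exact integral_add (integrableOn_polar_apply_mul_apply hC₀ x y)
        (integrableOn_polar_apply_mul_apply hC₀ x y'))
    (fun c x y ↦ by
      simp only [map_smul, smul_eq_mul, mul_left_comm _ c]
      exact integral_const_mul c _)

lemma polarForm_apply (hC₀ : C ∈ 𝓝 0) (x y : E) :
    polarForm hC₀ x y = ∫ φ in StrongDual.polar ℝ C, φ x * φ y ∂Measure.addHaar := rfl

lemma polarForm_comm (hC₀ : C ∈ 𝓝 0) (x y : E) : polarForm hC₀ x y = polarForm hC₀ y x := by
  simp only [polarForm_apply, mul_comm]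

lemma polarForm_self_pos (hC : IsBounded C) (hC₀ : C ∈ 𝓝 0) {x : E} (hx : x ≠ 0) :
    0 < polarForm hC₀ x x := by
  refine (setIntegral_pos_iff_support_of_nonneg_ae
    (.of_forall fun φ : StrongDual ℝ E ↦ mul_self_nonneg (φ x))
    (integrableOn_polar_apply_mul_apply hC₀ x x)).2 ?_
  obtain ⟨φ, -, hφ⟩ := exists_dual_vector ℝ x (norm_ne_zero_iff.2 hx)
  have hφx : φ x ≠ 0 := by simp [hφ, hx]
  have h_nhds : StrongDual.polar ℝ C ∈ 𝓝 ((0 : ℝ) • φ) := by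
    rw [zero_smul]
    exact polar_mem_nhds_zero hC
  obtain ⟨c, hcC, hc⟩ : ∃ c : ℝ, c • φ ∈ interior (StrongDual.polar ℝ C) ∧ c ≠ 0 := by
    have h_near : ∀ᶠ c in 𝓝[≠] (0 : ℝ), c • φ ∈ interior (StrongDual.polar ℝ C) :=
      nhdsWithin_le_nhds
        ((continuous_id.smul continuous_const).continuousAt.eventually_mem
          (interior_mem_nhds.2 h_nhds))
    exact (h_near.and eventually_mem_nhdsWithin).exists
  have h_open : IsOpen (support (fun ψ : StrongDual ℝ E ↦ ψ x * ψ x) ∩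
      interior (StrongDual.polar ℝ C)) :=
    (Continuous.isOpen_support (by fun_prop)).inter isOpen_interior
  refine (h_open.measure_pos _ ⟨c • φ, ?_, hcC⟩).trans_le
    (measure_mono (inter_subset_inter_right _ interior_subset))
  simp [hc, hφx]

lemma polarForm_apply_apply_of_involutive (hC₀ : C ∈ 𝓝 0) {T : E →L[ℝ] E} (hT : Involutive T)
    (hTC : MapsTo T C C) (x y : E) : polarForm hC₀ (T x) (T y) = polarForm hC₀ x y := by
  let T' : StrongDual ℝ E →L[ℝ] StrongDual ℝ E := ContinuousLinearMap.precomp ℝ T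
  have hT' : Involutive T' := fun φ ↦ ContinuousLinearMap.ext fun z ↦ congrArg φ (hT z)
  have h_mapsTo : MapsTo T' (StrongDual.polar ℝ C) (StrongDual.polar ℝ C) :=
    fun φ hφ z hz ↦ hφ (T z) (hTC hz)
  have h_preimage : T' ⁻¹' StrongDual.polar ℝ C = StrongDual.polar ℝ C :=
    Subset.antisymm (fun φ hφ ↦ hT' φ ▸ h_mapsTo hφ) h_mapsTo
  have h_integral := (measurePreserving_of_involutive Measure.addHaar
      (T := T'.toLinearMap) hT').setIntegral_preimage_emb
    (MeasurableEquiv.ofInvolutive T' hT' T'.continuous.measurable).measurableEmbedding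
    (fun φ ↦ φ x * φ y) (StrongDual.polar ℝ C)
  rw [ContinuousLinearMap.coe_coe, h_preimage] at h_integral
  exact h_integral

lemma two_mul_polarForm_apply (hC₀ : C ∈ 𝓝 0) {φ : StrongDual ℝ E} {v : E} (hv : φ v = 2)
    (hvC : ∀ x ∈ C, x - φ x • v ∈ C) (z : E) :
    2 * polarForm hC₀ v z = polarForm hC₀ v v * φ z := by
  have h_inv := polarForm_apply_apply_of_involutive hC₀ (involutive_sub_smul hv) hvC v z
  have h_v : (1 - φ.smulRight v) v = -v := by simp [hv, two_smul]
  have h_z : (1 - φ.smulRight v) z = z - φ z • v := rfl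
  simp only [h_v, h_z, map_neg, map_sub, map_smul, LinearMap.neg_apply, smul_eq_mul] at h_inv
  linarith

namespace AdmitsHyperplaneReflections

lemma gauge_eq_of_polarForm_eq (hC : IsBounded C) (hC₀ : C ∈ 𝓝 0)
    (h_refl : AdmitsHyperplaneReflections C) {x y : E}
    (hxy : polarForm hC₀ x x = polarForm hC₀ y y) : gauge C x = gauge C y := by
  rcases eq_or_ne x y with rfl | hne
  · rfl
  let B := polarForm hC₀
  have h_pos : 0 < B (x - y) (x - y) := polarForm_self_pos hC hC₀ (sub_ne_zero.2 hne)
  let φ : StrongDual ℝ E := (B (x - y)).toContinuousLinearMap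
  have hφ_apply (z : E) : φ z = B (x - y) z := rfl
  obtain ⟨v, hv, hvC⟩ := h_refl φ fun h_zero ↦ h_pos.ne' (DFunLike.congr_fun h_zero (x - y))
  obtain ⟨c, rfl⟩ : ∃ c : ℝ, v = c • (x - y) := by
    refine ⟨B v v / 2, ?_⟩
    by_contra! hv_ne
    let w := v - (B v v / 2) • (x - y)
    have hw_pos : 0 < B w w := polarForm_self_pos hC hC₀ (sub_ne_zero.2 hv_ne)
    have hw_eq : B w w = B v w - B v v / 2 * φ w := by simp [w, φ]
    have h_two : 2 * B v w = B v v * φ w := two_mul_polarForm_apply hC₀ hv hvC w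
    linarith
  have hφx : 2 * φ x = φ (x - y) := by
    have h_comm : B x y = B y x := polarForm_comm hC₀ x y
    have h_self : B x x = B y y := hxy
    simp only [hφ_apply, map_sub, LinearMap.sub_apply]
    linarith only [h_comm, h_self]
  have h_scalar : φ x * c = 1 := by
    rw [map_smul, smul_eq_mul, ← hφx] at hv
    linarith
  calc gauge C x = gauge C (x - φ x • c • (x - y)) :=
        (gauge_apply_of_involutive (T := 1 - φ.smulRight (c • (x - y)))
          (involutive_sub_smul hv) hvC x).symm
    _ = gauge C y := by rw [smul_smul, h_scalar, one_smul, sub_sub_cancel]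

lemma exists_gauge_sq_eq_mul_polarForm (hC : IsBounded C) (hC₀ : C ∈ 𝓝 0)
    (h_refl : AdmitsHyperplaneReflections C) :
    ∃ k, ∀ x, gauge C x * gauge C x = k * polarForm hC₀ x x := by
  rcases subsingleton_or_nontrivial E with hE | hE
  · exact ⟨0, fun x ↦ by simp [Subsingleton.elim x 0]⟩
  obtain ⟨z, hz⟩ := exists_ne (0 : E)
  have hz_pos := polarForm_self_pos hC hC₀ hz
  refine ⟨gauge C z * gauge C z / polarForm hC₀ z z, fun x ↦ ?_⟩
  let r := √(polarForm hC₀ x x / polarForm hC₀ z z)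
  have h_nonneg : 0 ≤ polarForm hC₀ x x / polarForm hC₀ z z :=
    div_nonneg (integral_nonneg fun φ ↦ mul_self_nonneg (φ x)) hz_pos.le
  have hr : r * r = polarForm hC₀ x x / polarForm hC₀ z z := Real.mul_self_sqrt h_nonneg
  have h_form : polarForm hC₀ x x = polarForm hC₀ (r • z) (r • z) := by
    simp only [map_smul, LinearMap.smul_apply, smul_eq_mul, ← mul_assoc, hr]
    rw [div_mul_cancel₀ _ hz_pos.ne']
  rw [h_refl.gauge_eq_of_polarForm_eq hC hC₀ h_form, gauge_smul_of_nonneg (Real.sqrt_nonneg _),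
    smul_eq_mul, mul_mul_mul_comm, hr]
  ring

lemma gauge_parallelogram (hC : IsBounded C) (hC₀ : C ∈ 𝓝 0)
    (h_refl : AdmitsHyperplaneReflections C) (x y : E) :
    gauge C (x + y) * gauge C (x + y) + gauge C (x - y) * gauge C (x - y) =
      2 * (gauge C x * gauge C x + gauge C y * gauge C y) := by
  obtain ⟨k, hk⟩ := h_refl.exists_gauge_sq_eq_mul_polarForm hC hC₀
  simp only [hk, map_add, map_sub, LinearMap.add_apply, LinearMap.sub_apply]
  ring

end AdmitsHyperplaneReflections

end PolarForm

section Ellipsoid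

lemma exists_linearEquiv_norm_eq_of_parallelogram {E : Type*} [AddCommGroup E] [Module ℝ E]
    [FiniteDimensional ℝ E] (p : Seminorm ℝ E) (hp : ∀ x, p x = 0 → x = 0)
    (h_law : ∀ x y, p (x + y) * p (x + y) + p (x - y) * p (x - y) = 2 * (p x * p x + p y * p y)) :
    ∃ L : E ≃ₗ[ℝ] EuclideanSpace ℝ (Fin (finrank ℝ E)), ∀ x, ‖L x‖ = p x := by
  let _ : Norm E := ⟨p⟩
  have core : NormedSpace.Core ℝ E :=
    { norm_nonneg := apply_nonneg p
      norm_smul := map_smul_eq_mul p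
      norm_triangle := map_add_le_add p
      norm_eq_zero_iff := fun x ↦ ⟨hp x, fun hx ↦ hx ▸ map_zero p⟩ }
  let _ : NormedAddCommGroup E := NormedAddCommGroup.ofCore core
  let _ : NormedSpace ℝ E := NormedSpace.ofCore core
  let _ : InnerProductSpace ℝ E := InnerProductSpace.ofNorm ℝ h_law
  exact ⟨(stdOrthonormalBasis ℝ E).repr.toLinearEquiv, (stdOrthonormalBasis ℝ E).repr.norm_map⟩

variable {E : Type*} [NormedAddCommGroup E] [NormedSpace ℝ E] {C : Set E}

lemma exists_ne_zero_apply_eq_zero_of_three_le_finrank [FiniteDimensional ℝ E]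
    (hE : 3 ≤ finrank ℝ E) (x y : E) : ∃ α : StrongDual ℝ E, α ≠ 0 ∧ α x = 0 ∧ α y = 0 := by
  classical
  have h_span : Submodule.span ℝ {x, y} < ⊤ := by
    refine Submodule.lt_top_of_finrank_lt_finrank ?_
    have h_le := finrank_span_finset_le_card (R := ℝ) ({x, y} : Finset E)
    rw [Set.finrank, Finset.coe_pair] at h_le
    exact (h_le.trans Finset.card_le_two).trans_lt hE
  obtain ⟨α, hα, h_ker⟩ := Submodule.exists_le_ker_of_lt_top _ h_span
  refine ⟨α.toContinuousLinearMap, ?_, ?_, ?_⟩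
  · simpa using hα
  · exact h_ker (Submodule.subset_span (by simp))
  · exact h_ker (Submodule.subset_span (by simp))

namespace AdmitsHyperplaneProjections

variable [FiniteDimensional ℝ E]

lemma gauge_parallelogram (hC : IsCompact C) (hC₀ : C ∈ 𝓝 0)
    (h_proj : AdmitsHyperplaneProjections C) (hE : 3 ≤ finrank ℝ E) (x y : E) :
    gauge C (x + y) * gauge C (x + y) + gauge C (x - y) * gauge C (x - y) =
      2 * (gauge C x * gauge C x + gauge C y * gauge C y) := by
  obtain ⟨α, hα, hαx, hαy⟩ := exists_ne_zero_apply_eq_zero_of_three_le_finrank hE x y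
  have h_bounded : IsBounded ((↑) ⁻¹' C : Set α.ker) :=
    isBounded_image_subtype_val.1 (hC.isBounded.subset (image_preimage_subset _ _))
  have h_nhds : ((↑) ⁻¹' C : Set α.ker) ∈ 𝓝 0 :=
    continuous_subtype_val.continuousAt.preimage_mem_nhds hC₀
  have h_law := (h_proj.admitsHyperplaneReflections_ker hC hC₀ hα).gauge_parallelogram
    h_bounded h_nhds ⟨x, hαx⟩ ⟨y, hαy⟩
  have h_gauge (z : α.ker) : gauge ((↑) ⁻¹' C) z = gauge C z := gauge_preimage α.ker.subtype C z
  simp only [h_gauge] at h_law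
  exact h_law

theorem exists_linearEquiv_preimage_closedBall (hC : IsCompact C) (hC_conv : Convex ℝ C)
    (hC₀ : C ∈ 𝓝 0) (h_proj : AdmitsHyperplaneProjections C) (hE : 3 ≤ finrank ℝ E) :
    ∃ L : E ≃ₗ[ℝ] EuclideanSpace ℝ (Fin (finrank ℝ E)), C = L ⁻¹' closedBall 0 1 := by
  have h_absorbent : Absorbent ℝ C := absorbent_nhds_zero hC₀
  have h_mem (x : E) : x ∈ C ↔ gauge C x ≤ 1 := by
    rw [gauge_le_one_iff_mem_closure hC_conv hC₀, hC.isClosed.closure_eq]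
  have h_law := h_proj.gauge_parallelogram hC hC₀ hE
  have h_even (x : E) : gauge C (-x) = gauge C x := by
    have h := h_law 0 x
    simp only [zero_add, zero_sub, gauge_zero] at h
    exact (mul_self_inj (gauge_nonneg _) (gauge_nonneg _)).1 (by linarith)
  have h_balanced : Balanced ℝ C :=
    (balanced_iff_neg_mem hC_conv).2 fun x hx ↦ (h_mem _).2 ((h_even x).trans_le ((h_mem x).1 hx))
  obtain ⟨L, hL⟩ := exists_linearEquiv_norm_eq_of_parallelogram
    (gaugeSeminorm h_balanced hC_conv h_absorbent)
    (fun x ↦ (gauge_eq_zero h_absorbent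
      (NormedSpace.isVonNBounded_of_isBounded ℝ hC.isBounded)).1) h_law
  refine ⟨L, Set.ext fun x ↦ ?_⟩
  rw [h_mem, mem_preimage, mem_closedBall_zero_iff, hL, gaugeSeminorm_toFun]

end AdmitsHyperplaneProjections

end Ellipsoid

/-! ### Shadow boundaries -/

section ShadowBoundary

variable {E : Type*} [NormedAddCommGroup E] [NormedSpace ℝ E] {C : Set E}

/-- The shadow boundary of `K` in the direction `v`: the boundary points of `K` at which some
supporting hyperplane, given by a nonzero functional, is parallel to `v`. -/
def shadowBoundary (K : Set E) (v : E) : Set E :=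
  {p ∈ frontier K | ∃ w : StrongDual ℝ E, w ≠ 0 ∧ (∀ z ∈ K, w z ≤ w p) ∧ w v = 0}

lemma apply_pos_of_forall_apply_le (hC₀ : C ∈ 𝓝 0) {w : StrongDual ℝ E} (hw : w ≠ 0) {p : E}
    (hp : ∀ z ∈ C, w z ≤ w p) : 0 < w p := by
  by_contra! h_nonpos
  have h_max : IsLocalMax w 0 := by
    filter_upwards [hC₀] with z hz
    simpa only [map_zero] using (hp z hz).trans h_nonpos
  exact hw (h_max.hasFDerivAt_eq_zero w.hasFDerivAt)

lemma inv_gauge_smul_mem_frontier (hC : IsBounded C) (hC_conv : Convex ℝ C) (hC₀ : C ∈ 𝓝 0)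
    {x : E} (hx : x ≠ 0) : (gauge C x)⁻¹ • x ∈ frontier C := by
  have h_pos : 0 < gauge C x :=
    (gauge_pos (absorbent_nhds_zero hC₀) (NormedSpace.isVonNBounded_of_isBounded ℝ hC)).2 hx
  rw [← gauge_eq_one_iff_mem_frontier hC_conv hC₀, gauge_smul_of_nonneg (inv_nonneg.2 h_pos.le),
    smul_eq_mul, inv_mul_cancel₀ h_pos.ne']

lemma mem_of_inter_frontier_subset_shadowBoundary {φ : StrongDual ℝ E} {v : E} (hC : IsCompact C)
    (hC_conv : Convex ℝ C) (hC₀ : C ∈ 𝓝 0) (h : {p | φ p = 0} ∩ frontier C ⊆ shadowBoundary C v)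
    {x : E} (hx : x ∈ C) {t : ℝ} (hxt : φ (x - t • v) = 0) : x - t • v ∈ C := by
  set y := x - t • v with hy
  by_contra hyC
  have hy₀ : y ≠ 0 := fun h_zero ↦ hyC (h_zero ▸ mem_of_mem_nhds hC₀)
  have h_gauge : 1 < gauge C y := by
    rwa [← not_le, gauge_le_one_iff_mem_closure hC_conv hC₀, hC.isClosed.closure_eq]
  obtain ⟨-, w, hw, hw_max, hwv⟩ :=
    h ⟨by simp [hxt], inv_gauge_smul_mem_frontier hC.isBounded hC_conv hC₀ hy₀⟩
  have h_pos : 0 < (gauge C y)⁻¹ * w y := by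
    simpa using apply_pos_of_forall_apply_le hC₀ hw hw_max
  have h_le : w y ≤ (gauge C y)⁻¹ * w y := by
    simpa [hy, hwv] using hw_max x hx
  have hwy : 0 < w y := pos_of_mul_pos_right h_pos (by positivity)
  exact h_le.not_gt (mul_lt_of_lt_one_left hwy (inv_lt_one_of_one_lt₀ h_gauge))

lemma apply_ne_zero_of_inter_frontier_subset_shadowBoundary {φ : StrongDual ℝ E} {v : E}
    (hC : IsBounded C) (hC_conv : Convex ℝ C) (hC₀ : C ∈ 𝓝 0) (hv : v ≠ 0)
    (h : {p | φ p = 0} ∩ frontier C ⊆ shadowBoundary C v) : φ v ≠ 0 := by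
  intro hφv
  obtain ⟨-, w, hw, hw_max, hwv⟩ :=
    h ⟨by simp [hφv], inv_gauge_smul_mem_frontier hC hC_conv hC₀ hv⟩
  simpa [hwv] using apply_pos_of_forall_apply_le hC₀ hw hw_max

lemma admitsHyperplaneProjections_of_shadowBoundary (hC : IsCompact C) (hC_conv : Convex ℝ C)
    (hC₀ : C ∈ 𝓝 0)
    (h : ∀ φ : StrongDual ℝ E, φ ≠ 0 → ∃ v ≠ 0, {p | φ p = 0} ∩ frontier C ⊆ shadowBoundary C v) :
    AdmitsHyperplaneProjections C := by
  intro φ hφ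
  obtain ⟨v, hv, h_shadow⟩ := h φ hφ
  have hφv : φ v ≠ 0 :=
    apply_ne_zero_of_inter_frontier_subset_shadowBoundary hC.isBounded hC_conv hC₀ hv h_shadow
  refine ⟨(φ v)⁻¹ • v, by simp [hφv], fun x hx ↦ ?_⟩
  rw [smul_smul]
  exact mem_of_inter_frontier_subset_shadowBoundary hC hC_conv hC₀ h_shadow hx (by simp [hφv])

lemma mem_shadowBoundary_preimage_add_left {K : Set E} {O p v : E} :
    p ∈ shadowBoundary ((O + ·) ⁻¹' K) v ↔ O + p ∈ shadowBoundary K v := by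
  have h_frontier : frontier ((O + ·) ⁻¹' K) = (O + ·) ⁻¹' frontier K :=
    ((Homeomorph.addLeft O).preimage_frontier K).symm
  have h_max (w : StrongDual ℝ E) :
      (∀ z, O + z ∈ K → w z ≤ w p) ↔ ∀ z ∈ K, w z ≤ w (O + p) :=
    ⟨fun h z hz ↦ by simpa [add_comm (w p)] using h (z - O) (by simpa using hz),
      fun h z hz ↦ by simpa using h (O + z) hz⟩
  simp only [shadowBoundary, h_frontier, h_max, mem_ofPred_eq, mem_preimage]

lemma exists_inter_frontier_subset_shadowBoundary_of_inner {H : Type*} [NormedAddCommGroup H]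
    [InnerProductSpace ℝ H] [CompleteSpace H] {K : Set H} {O : H}
    (h : ∀ u : H, u ≠ 0 → ∃ v : H, v ≠ 0 ∧ ∀ p ∈ {p : H | ⟪u, p - O⟫ = 0} ∩ frontier K,
      ∃ w : H, w ≠ 0 ∧ (∀ z ∈ K, ⟪w, z⟫ ≤ ⟪w, p⟫) ∧ ⟪w, v⟫ = 0)
    (φ : StrongDual ℝ H) (hφ : φ ≠ 0) :
    ∃ v ≠ 0, {p | φ p = φ O} ∩ frontier K ⊆ shadowBoundary K v := by
  let toDual := InnerProductSpace.toDual ℝ H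
  obtain ⟨v, hv, h_support⟩ := h (toDual.symm φ) (by simpa using hφ)
  refine ⟨v, hv, fun p ⟨hφp, hp⟩ ↦ ⟨hp, ?_⟩⟩
  obtain ⟨w, hw, hw_max, hwv⟩ := h_support p ⟨by simpa [toDual, sub_eq_zero] using hφp, hp⟩
  exact ⟨toDual w, by simpa using hw, hw_max, hwv⟩

end ShadowBoundary

theorem stmt17_general {E : Type*} [NormedAddCommGroup E] [NormedSpace ℝ E]
    [FiniteDimensional ℝ E] {n : ℕ} (hE : finrank ℝ E = n) (hn : 3 ≤ n) {K : Set E}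
    (hK : IsCompact K) (hK_conv : Convex ℝ K) {O : E} (hO : O ∈ interior K)
    (h : ∀ φ : StrongDual ℝ E, φ ≠ 0 →
      ∃ v ≠ 0, {p | φ p = φ O} ∩ frontier K ⊆ shadowBoundary K v) :
    ∃ f : EuclideanSpace ℝ (Fin n) ≃ᵃ[ℝ] E, K = f '' closedBall 0 1 := by
  subst hE
  let C : Set E := (O + ·) ⁻¹' K
  have hC : IsCompact C := (Homeomorph.addLeft O).isCompact_preimage.2 hK
  have hC_conv : Convex ℝ C := hK_conv.translate_preimage_right O
  have hC₀ : C ∈ 𝓝 0 := (continuous_const_add O).continuousAt.preimage_mem_nhds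
    (by simpa using mem_interior_iff_mem_nhds.1 hO)
  have h_proj : AdmitsHyperplaneProjections C := by
    refine admitsHyperplaneProjections_of_shadowBoundary hC hC_conv hC₀ fun φ hφ ↦ ?_
    obtain ⟨v, hv, h_shadow⟩ := h φ hφ
    refine ⟨v, hv, fun p ⟨hφp, hp⟩ ↦ mem_shadowBoundary_preimage_add_left.2 (h_shadow ⟨?_, ?_⟩)⟩
    · simpa using hφp
    · exact ((Homeomorph.addLeft O).preimage_frontier K).ge hp
  obtain ⟨L, hL⟩ := h_proj.exists_linearEquiv_preimage_closedBall hC hC_conv hC₀ hn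
  refine ⟨L.symm.toAffineEquiv.trans (AffineEquiv.constVAdd ℝ E O), ?_⟩
  calc K = (O + ·) '' C := (image_preimage_eq K (add_left_surjective O)).symm
    _ = (O + ·) '' (L.symm '' closedBall 0 1) := by rw [L.image_symm_eq_preimage, ← hL]
    _ = _ := image_image _ _ _

/-- Kakutani-type characterization: if for every hyperplane `Λ` through a fixed interior
point `O` there is a line direction `v` such that `Λ ∩ bd K` lies in the shadow boundary
of `K` in the direction `v`, then `K` is an ellipsoid. -/
theorem stmt17 {n : ℕ} (hn : 3 ≤ n) (K : Set (EuclideanSpace ℝ (Fin n)))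
    (hK : IsConvexBody K) (O : EuclideanSpace ℝ (Fin n)) (hO : O ∈ interior K)
    (h : ∀ u : EuclideanSpace ℝ (Fin n), u ≠ 0 →
      ∃ v : EuclideanSpace ℝ (Fin n), v ≠ 0 ∧
        ∀ p ∈ {p : EuclideanSpace ℝ (Fin n) | ⟪u, p - O⟫ = 0} ∩ frontier K,
          ∃ w : EuclideanSpace ℝ (Fin n), w ≠ 0 ∧
            (∀ z ∈ K, ⟪w, z⟫ ≤ ⟪w, p⟫) ∧ ⟪w, v⟫ = 0) :
    IsEllipsoid K := by
  exact stmt17_general (by simp) hn hK.1 hK.2.1 hO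
    (exists_inter_frontier_subset_shadowBoundary_of_inner h)
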